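/- arXiv:2401.07848 — 2 statements merged into one kernel-verified Lean document; each statement's English description precedes it below -/
import Mathlib

section
/- Let h : ℝ⁴ → ℂ be smooth and nowhere vanishing, and define the matrix-valued function M_h : ℝ⁴ → M₄(ℂ), M_h(x) := diag(|h(x)|² I₂, |h(x)|^{−2} I₂) (this is the adjoint action Ad(u_h) = u_h 𝒥 u_h 𝒥⁻¹ of the twisted unitary u_h = (h, 1/conj(h))). Then for every smooth ψ : ℝ⁴ → ℂ⁴ and every x ∈ ℝ⁴: M_h(x) · ( −i Σ_{μ=0}^{3} γ^μ ∂_μ(M_h ψ)(x) ) = −i Σ_{μ=0}^{3} γ^μ (∂_μ ψ)(x) − i Σ_{μ=0}^{3} (∂_μ (log |h|²))(x) · γ^μ Γ₅ ψ(x). In other words, conjugating the flat Dirac operator by M_h generates the torsion term −i γ^μ f_μ Γ₅ with f = d(log|h|²). -/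
open Matrix

/-- The chiral Euclidean Dirac matrices on ℝ⁴:
`γ^a = fromBlocks 0 σ^a σ̃^a 0` with `σ^0 = σ̃^0 = I₂`, `σ^j = −iσⱼ`, `σ̃^j = iσⱼ`. -/
noncomputable def γE : Fin 4 → Matrix (Fin 4) (Fin 4) ℂ :=
  ![!![0, 0, 1, 0; 0, 0, 0, 1; 1, 0, 0, 0; 0, 1, 0, 0],
    !![0, 0, 0, -Complex.I; 0, 0, -Complex.I, 0;
       0, Complex.I, 0, 0; Complex.I, 0, 0, 0],
    !![0, 0, 0, -1; 0, 0, 1, 0; 0, 1, 0, 0; -1, 0, 0, 0],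
    !![0, 0, -Complex.I, 0; 0, 0, 0, Complex.I;
       Complex.I, 0, 0, 0; 0, -Complex.I, 0, 0]]

/-- The grading `Γ₅ = diag(I₂, −I₂)`. -/
noncomputable def Γ₅ : Matrix (Fin 4) (Fin 4) ℂ :=
  !![1, 0, 0, 0; 0, 1, 0, 0; 0, 0, -1, 0; 0, 0, 0, -1]

/-- The adjoint action `Ad(u_h) = diag(|h|² I₂, |h|⁻² I₂)` of the twisted unitary
`u_h = (h, 1/conj h)`. -/
noncomputable def Mh (h : (Fin 4 → ℝ) → ℂ) (x : Fin 4 → ℝ) : Matrix (Fin 4) (Fin 4) ℂ :=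
  Matrix.diagonal
    ![((‖h x‖ ^ 2 : ℝ) : ℂ), ((‖h x‖ ^ 2 : ℝ) : ℂ),
      (((‖h x‖ ^ 2 : ℝ) : ℂ))⁻¹, (((‖h x‖ ^ 2 : ℝ) : ℂ))⁻¹]

/-!
Write `r = |h|²` and `M r = exp (log r • Γ₅) = cosh (log r) + sinh (log r) • Γ₅`. Since `γ^μ`
anticommutes with `Γ₅`, moving `γ^μ` past `M r` turns it into `M r⁻¹`, so `M r * γ^μ * M r = γ^μ`;
since `M r` is an exponential, `∂_μ (M r ψ) = M r (∂_μ ψ + ∂_μ (log r) • Γ₅ ψ)`.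
-/

section Algebra

variable {K A : Type*} [Field K] [Ring A] [Algebra K A]

/-- The exponential `exp (log r • Γ) = cosh (log r) + sinh (log r) • Γ` generated by a grading `Γ`,
which acts as `r` on the `+1` eigenspace of `Γ` and as `r⁻¹` on the `-1` eigenspace. Writing the
hyperbolic functions of `log r` as rational functions of `r` makes sense over any field in which
`2 ≠ 0`, and for `r ≠ 0`. -/
def chiralScaling (Γ : A) (r : K) : A :=
  ((r + r⁻¹) / 2) • (1 : A) + ((r - r⁻¹) / 2) • Γ

theorem chiralScaling_mul_mul_chiralScaling [NeZero (2 : K)] {Γ γ : A} {r : K}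
    (hΓ : Γ * Γ = 1) (hγ : Γ * γ = -(γ * Γ)) (hr : r ≠ 0) :
    chiralScaling Γ r * γ * chiralScaling Γ r = γ := by
  have htwo : (2 : K) ≠ 0 := NeZero.ne 2
  have cosh_sq_sub_sinh_sq : ((r + r⁻¹) / 2) ^ 2 - ((r - r⁻¹) / 2) ^ 2 = 1 := by
    field_simp
    ring
  have grading_conj : Γ * γ * Γ = -γ := by
    rw [hγ, neg_mul, mul_assoc, hΓ, mul_one]
  unfold chiralScaling
  generalize (r + r⁻¹) / 2 = c, (r - r⁻¹) / 2 = s at cosh_sq_sub_sinh_sq ⊢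
  calc (c • 1 + s • Γ) * γ * (c • 1 + s • Γ)
      = c ^ 2 • γ + (c * s) • (Γ * γ + γ * Γ) + s ^ 2 • (Γ * γ * Γ) := by
        simp only [add_mul, mul_add, smul_mul_assoc, mul_smul_comm, one_mul, mul_one]
        module
    _ = (c ^ 2 - s ^ 2) • γ := by
        rw [grading_conj, hγ]
        module
    _ = γ := by rw [cosh_sq_sub_sinh_sq, one_smul]

theorem chiralScaling_mulVec {n : Type*} [Fintype n] [DecidableEq n] (Γ : Matrix n n K) (r : K)
    (w : n → K) :
    chiralScaling Γ r *ᵥ w = ((r + r⁻¹) / 2) • w + ((r - r⁻¹) / 2) • (Γ *ᵥ w) := by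
  simp only [chiralScaling, add_mulVec, smul_mulVec, one_mulVec]

end Algebra

section Calculus

variable {𝕜 𝕂 E : Type*} [NontriviallyNormedField 𝕜] [NormedField 𝕂] [NormedAlgebra 𝕜 𝕂]
  [NormedAddCommGroup E] [NormedSpace 𝕜 E] {r : E → 𝕂} {r' : E →L[𝕜] 𝕂} {x : E}

theorem hasFDerivAt_inv_comp (hr : HasFDerivAt r r' x) (hx : r x ≠ 0) :
    HasFDerivAt (fun y => (r y)⁻¹) (-((r x)⁻¹ • (r x)⁻¹ • r')) x := by
  refine ((hasFDerivAt_inv' hx).comp x hr).congr_fderiv (ContinuousLinearMap.ext fun v => ?_)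
  simp [mul_right_comm, mul_assoc]

theorem hasFDerivAt_add_inv_div_two (hr : HasFDerivAt r r' x) (hx : r x ≠ 0) :
    HasFDerivAt (fun y => (r y + (r y)⁻¹) / 2)
      (((r x - (r x)⁻¹) / 2) • (r x)⁻¹ • r') x := by
  simp_rw [div_eq_mul_inv _ (2 : 𝕂)]
  refine ((hr.add (hasFDerivAt_inv_comp hr hx)).mul_const _).congr_fderiv
    (ContinuousLinearMap.ext fun v => ?_)
  simp only [smul_add, smul_neg, _root_.add_apply, _root_.smul_apply, _root_.neg_apply,
    smul_eq_mul]
  field_simp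
  ring

theorem hasFDerivAt_sub_inv_div_two (hr : HasFDerivAt r r' x) (hx : r x ≠ 0) :
    HasFDerivAt (fun y => (r y - (r y)⁻¹) / 2)
      (((r x + (r x)⁻¹) / 2) • (r x)⁻¹ • r') x := by
  simp_rw [div_eq_mul_inv _ (2 : 𝕂)]
  refine ((hr.sub (hasFDerivAt_inv_comp hr hx)).mul_const _).congr_fderiv
    (ContinuousLinearMap.ext fun v => ?_)
  simp only [sub_neg_eq_add, smul_add, _root_.add_apply, _root_.smul_apply, smul_eq_mul]
  field_simp

variable {n : Type*} [Fintype n] {ψ : E → n → 𝕂}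

variable (𝕜) in
/-- Multiplication of vectors by the matrix `B` as a continuous linear map. Its scalars are
restricted to a subfield `𝕜` of the field of entries, over which derivatives are then taken. -/
def mulVecCLM {m : Type*} (B : Matrix m n 𝕂) : (n → 𝕂) →L[𝕜] (m → 𝕂) :=
  ⟨B.mulVecLin.restrictScalars 𝕜, continuous_const.matrix_mulVec continuous_id⟩

theorem mulVecCLM_apply {m : Type*} (B : Matrix m n 𝕂) (w : n → 𝕂) :
    mulVecCLM 𝕜 B w = B *ᵥ w :=
  rfl

theorem fderiv_chiralScaling_mulVec_apply [DecidableEq n] {Γ : Matrix n n 𝕂} (hΓ : Γ * Γ = 1)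
    (hr : DifferentiableAt 𝕜 r x) (hx : r x ≠ 0) (hψ : DifferentiableAt 𝕜 ψ x) (v : E) :
    fderiv 𝕜 (fun y => chiralScaling Γ (r y) *ᵥ ψ y) x v =
      chiralScaling Γ (r x) *ᵥ
        (fderiv 𝕜 ψ x v + ((r x)⁻¹ * fderiv 𝕜 r x v) • (Γ *ᵥ ψ x)) := by
  have hcosh := hasFDerivAt_add_inv_div_two hr.hasFDerivAt hx
  have hsinh := hasFDerivAt_sub_inv_div_two hr.hasFDerivAt hx
  have hderiv := (hcosh.smul hψ.hasFDerivAt).add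
    (hsinh.smul ((mulVecCLM 𝕜 Γ).hasFDerivAt.comp x hψ.hasFDerivAt))
  have grading_grading : Γ *ᵥ (Γ *ᵥ ψ x) = ψ x := by rw [mulVec_mulVec, hΓ, one_mulVec]
  simp_rw [chiralScaling_mulVec]
  refine (DFunLike.congr_fun hderiv.fderiv v).trans ?_
  simp only [Function.comp_apply, mulVecCLM_apply, _root_.add_apply, _root_.smul_apply,
    ContinuousLinearMap.smulRight_apply, ContinuousLinearMap.comp_apply, smul_eq_mul,
    mulVec_add, mulVec_smul, grading_grading]
  module

end Calculus

theorem chiralScaling_mulVec_mulVec_fderiv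
    {E n : Type*} [NormedAddCommGroup E] [NormedSpace ℝ E] [Fintype n] [DecidableEq n]
    {Γ γ : Matrix n n ℂ} (hΓ : Γ * Γ = 1) (hγ : Γ * γ = -(γ * Γ))
    {ρ : E → ℝ} {ψ : E → n → ℂ} {x : E} (hρ : DifferentiableAt ℝ ρ x) (hx : ρ x ≠ 0)
    (hψ : DifferentiableAt ℝ ψ x) (v : E) :
    chiralScaling Γ (ρ x : ℂ) *ᵥ
        (γ *ᵥ fderiv ℝ (fun y => chiralScaling Γ (ρ y : ℂ) *ᵥ ψ y) x v) =
      γ *ᵥ fderiv ℝ ψ x v +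
        (fderiv ℝ (fun y => Real.log (ρ y)) x v : ℂ) • ((γ * Γ) *ᵥ ψ x) := by
  have hxc : (ρ x : ℂ) ≠ 0 := Complex.ofReal_ne_zero.2 hx
  have hρc : HasFDerivAt (fun y => (ρ y : ℂ)) (Complex.ofRealCLM.comp (fderiv ℝ ρ x)) x :=
    Complex.ofRealCLM.hasFDerivAt.comp x hρ.hasFDerivAt
  have hlog : (fderiv ℝ (fun y => Real.log (ρ y)) x v : ℂ) =
      (ρ x : ℂ)⁻¹ * fderiv ℝ (fun y => (ρ y : ℂ)) x v := by
    simp [fderiv.log hρ hx, hρc.fderiv]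
  rw [fderiv_chiralScaling_mulVec_apply hΓ hρc.differentiableAt hxc hψ, ← hlog, mulVec_mulVec,
    mulVec_mulVec, chiralScaling_mul_mul_chiralScaling hΓ hγ hxc, mulVec_add, mulVec_smul,
    mulVec_mulVec]

theorem Γ₅_mul_Γ₅ : Γ₅ * Γ₅ = 1 := by
  ext i j
  fin_cases i <;> fin_cases j <;> simp [Γ₅, Matrix.mul_apply, Fin.sum_univ_four]

theorem Γ₅_mul_γE (μ : Fin 4) : Γ₅ * γE μ = -(γE μ * Γ₅) := by
  ext i j
  fin_cases μ <;> fin_cases i <;> fin_cases j <;>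
    simp [Γ₅, γE, Matrix.mul_apply, Fin.sum_univ_four]

theorem Mh_eq_chiralScaling (h : (Fin 4 → ℝ) → ℂ) (x : Fin 4 → ℝ) :
    Mh h x = chiralScaling Γ₅ ((‖h x‖ ^ 2 : ℝ) : ℂ) := by
  unfold Mh
  generalize ((‖h x‖ ^ 2 : ℝ) : ℂ) = r
  ext i j
  fin_cases i <;> fin_cases j <;> simp [chiralScaling, Γ₅] <;> ring

theorem statement10_general {ι n E F : Type*} [Fintype ι] [Fintype n] [DecidableEq n]
    [NormedAddCommGroup E] [NormedSpace ℝ E] [NormedAddCommGroup F] [InnerProductSpace ℝ F]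
    {Γ : Matrix n n ℂ} (hΓ : Γ * Γ = 1)
    {γ : ι → Matrix n n ℂ} (hγ : ∀ μ, Γ * γ μ = -(γ μ * Γ))
    {h : E → F} {ψ : E → n → ℂ} {x : E} (hh : DifferentiableAt ℝ h x) (hx : h x ≠ 0)
    (hψ : DifferentiableAt ℝ ψ x) (e : ι → E) :
    chiralScaling Γ ((‖h x‖ ^ 2 : ℝ) : ℂ) *ᵥ
        ((-Complex.I) • ∑ μ, γ μ *ᵥ
          fderiv ℝ (fun y => chiralScaling Γ ((‖h y‖ ^ 2 : ℝ) : ℂ) *ᵥ ψ y) x (e μ)) =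
      (-Complex.I) • (∑ μ, γ μ *ᵥ fderiv ℝ ψ x (e μ)) -
        Complex.I • ∑ μ, ((fderiv ℝ (fun y => Real.log (‖h y‖ ^ 2)) x (e μ) : ℝ) : ℂ) •
          ((γ μ * Γ) *ᵥ ψ x) := by
  have hx_sq : ‖h x‖ ^ 2 ≠ 0 := pow_ne_zero 2 (norm_ne_zero_iff.2 hx)
  simp_rw [mulVec_smul, mulVec_sum,
    chiralScaling_mulVec_mulVec_fderiv hΓ (hγ _) (hh.norm_sq ℝ) hx_sq hψ, Finset.sum_add_distrib]
  module

/-- Conjugating the flat Dirac operator by `Ad(u_h)` generates the torsion term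
`−i γ^μ f_μ Γ₅` with `f = d(log |h|²)`. -/
theorem statement10 (h : (Fin 4 → ℝ) → ℂ) (hsm : ContDiff ℝ (⊤ : ℕ∞) h)
    (hnz : ∀ x, h x ≠ 0)
    (ψ : (Fin 4 → ℝ) → Fin 4 → ℂ) (hψ : ContDiff ℝ (⊤ : ℕ∞) ψ) (x : Fin 4 → ℝ) :
    Mh h x *ᵥ
        ((-Complex.I) • ∑ μ : Fin 4,
          γE μ *ᵥ fderiv ℝ (fun y => Mh h y *ᵥ ψ y) x (Pi.single μ 1)) =
      (-Complex.I) • (∑ μ : Fin 4, γE μ *ᵥ fderiv ℝ ψ x (Pi.single μ 1)) -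
        Complex.I • ∑ μ : Fin 4,
          ((fderiv ℝ (fun y => Real.log (‖h y‖ ^ 2)) x (Pi.single μ 1) : ℝ) : ℂ) •
            ((γE μ * Γ₅) *ᵥ ψ x) := by
  simp_rw [Mh_eq_chiralScaling]
  exact statement10_general Γ₅_mul_Γ₅ Γ₅_mul_γE (hsm.differentiable (by simp) x) (hnz x)
    (hψ.differentiable (by simp) x) _
end

section
/- Let f : ℝ⁴ → ℝ⁴ be smooth (with components f_μ) and define the twisted-covariant Dirac operator D_f ψ := −i Σ_μ γ^μ (∂_μ ψ) − i Σ_μ f_μ γ^μ Γ₅ ψ on smooth spinor fields ψ : ℝ⁴ → ℂ⁴. Let h' : ℝ⁴ → ℂ be smooth and nowhere vanishing and M_{h'}(x) := diag(|h'(x)|² I₂, |h'(x)|^{−2} I₂). Then for every smooth ψ and every x ∈ ℝ⁴: M_{h'}(x) · (D_f (M_{h'} ψ))(x) = −i Σ_μ γ^μ (∂_μ ψ)(x) − i Σ_μ ( f_μ(x) + ∂_μ(log|h'|²)(x) ) γ^μ Γ₅ ψ(x). That is, the conjugate action of the twisted unitary u_{h'} maps the 1-form f to f + d(log|h'|²).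 -/
open Matrix

/-- The twisted-covariant Dirac operator `D_f ψ = −i γ^μ ∂_μ ψ − i f_μ γ^μ Γ₅ ψ`. -/
noncomputable def Dirac (f : (Fin 4 → ℝ) → Fin 4 → ℝ)
    (ψ : (Fin 4 → ℝ) → Fin 4 → ℂ) (x : Fin 4 → ℝ) : Fin 4 → ℂ :=
  (-Complex.I) • (∑ μ : Fin 4, γE μ *ᵥ fderiv ℝ ψ x (Pi.single μ 1)) -
    Complex.I • ∑ μ : Fin 4, ((f x μ : ℝ) : ℂ) • ((γE μ * Γ₅) *ᵥ ψ x)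

/-!
With `φ = log |h|²` the twisted unitary acts as `exp (φ Γ₅)`. Each `γ μ` anticommutes with `Γ₅`,
which is expressed as `SemiconjBy (γ μ) Γ₅ (-Γ₅)`, so `exp (φ Γ₅) γ μ exp (φ Γ₅) = γ μ`; and
`∂_μ (exp (φ Γ₅) ψ) = exp (φ Γ₅) (∂_μ ψ + ∂_μ φ Γ₅ ψ)`. Hence sandwiching the Dirac operator between
two copies of `exp (φ Γ₅)` only shifts the potential by `dφ`.
-/

section GaugeTransformation

open NormedSpace

variable {E n ι : Type*} [NormedAddCommGroup E] [NormedSpace ℝ E] [Fintype n] [Fintype ι]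

theorem exp_mul_mul_exp_of_semiconjBy_neg {𝔸 : Type*} [NormedRing 𝔸] [NormedAlgebra ℚ 𝔸]
    [CompleteSpace 𝔸] {a b : 𝔸} (h : SemiconjBy b a (-a)) : exp a * b * exp a = b := by
  simpa only [neg_neg] using h.exp_neg_mul_mul_exp_eq_self

theorem hasFDerivAt_exp_smul {𝕜 𝔸 F : Type*} [RCLike 𝕜] [NormedRing 𝔸] [NormedAlgebra 𝕜 𝔸]
    [CompleteSpace 𝔸] [NormedAddCommGroup F] [NormedSpace 𝕜 F] (a : 𝔸) {φ : F → 𝕜}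
    {φ' : F →L[𝕜] 𝕜} {x : F} (hφ : HasFDerivAt φ φ' x) :
    HasFDerivAt (fun y => exp (φ y • a)) (φ'.smulRight (exp (φ x • a) * a)) x :=
  (hasDerivAt_exp_smul_const a (φ x)).hasFDerivAt.comp x hφ

open scoped Matrix.Norms.Operator in
theorem fderiv_mulVec_apply_of_hasFDerivAt {𝕜 R F m k : Type*}
    [NontriviallyNormedField 𝕜] [NormedRing R] [NormedAlgebra 𝕜 R] [NormedAddCommGroup F]
    [NormedSpace 𝕜 F] [Finite m] [Fintype k] {A : F → Matrix m k R} {A' : F →L[𝕜] Matrix m k R}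
    {ψ : F → k → R} {ψ' : F →L[𝕜] k → R} {x : F} (hA : HasFDerivAt A A' x)
    (hψ : HasFDerivAt ψ ψ' x) (v : F) :
    fderiv 𝕜 (fun y => A y *ᵥ ψ y) x v = A x *ᵥ ψ' v + A' v *ᵥ ψ x := by
  have := Fintype.ofFinite m
  let B : Matrix m k R →L[𝕜] (k → R) →L[𝕜] (m → R) :=
    (mulVecBilin 𝕜 𝕜).mkContinuous₂ 1 fun M w => by simpa using linfty_opNorm_mulVec M w
  exact congrArg (· v) (B.hasFDerivAt_of_bilinear hA hψ).fderiv

/-- The Dirac operator `-i ∑ μ, γ μ (∂_{e μ} + f μ Γ)` with derivatives along the directions `e μ`,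
coupled through the grading `Γ` to the real 1-form with components `f μ`. -/
noncomputable def twistedDirac (γ : ι → Matrix n n ℂ) (Γ : Matrix n n ℂ) (e : ι → E)
    (f : E → ι → ℝ) (ψ : E → n → ℂ) (x : E) : n → ℂ :=
  -Complex.I • ∑ μ, γ μ *ᵥ (fderiv ℝ ψ x (e μ) + (f x μ : ℂ) • Γ *ᵥ ψ x)

theorem twistedDirac_congr_of_eventuallyEq (γ : ι → Matrix n n ℂ) (Γ : Matrix n n ℂ) (e : ι → E)
    (f : E → ι → ℝ) {ψ₁ ψ₂ : E → n → ℂ} {x : E} (hψ : ψ₁ =ᶠ[nhds x] ψ₂) :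
    twistedDirac γ Γ e f ψ₁ x = twistedDirac γ Γ e f ψ₂ x := by
  rw [twistedDirac, twistedDirac, hψ.fderiv_eq, hψ.eq_of_nhds]

variable [DecidableEq n]

open scoped Matrix.Norms.Operator in
theorem fderiv_exp_smul_mulVec (Γ : Matrix n n ℂ) {φ : E → ℝ} {ψ : E → n → ℂ} {x : E}
    (hφ : DifferentiableAt ℝ φ x) (hψ : DifferentiableAt ℝ ψ x) (v : E) :
    fderiv ℝ (fun y => exp (φ y • Γ) *ᵥ ψ y) x v =
      exp (φ x • Γ) *ᵥ (fderiv ℝ ψ x v + (fderiv ℝ φ x v : ℂ) • Γ *ᵥ ψ x) := by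
  calc fderiv ℝ (fun y => exp (φ y • Γ) *ᵥ ψ y) x v
    _ = exp (φ x • Γ) *ᵥ fderiv ℝ ψ x v +
          (fderiv ℝ φ x v • (exp (φ x • Γ) * Γ)) *ᵥ ψ x :=
      fderiv_mulVec_apply_of_hasFDerivAt (hasFDerivAt_exp_smul Γ hφ.hasFDerivAt) hψ.hasFDerivAt v
    _ = exp (φ x • Γ) *ᵥ (fderiv ℝ ψ x v + (fderiv ℝ φ x v : ℂ) • Γ *ᵥ ψ x) := by
      rw [smul_mulVec, ← mulVec_mulVec, mulVec_add, mulVec_smul, Complex.coe_smul]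

open scoped Matrix.Norms.Operator in
theorem exp_mulVec_mulVec_exp_mulVec_of_semiconjBy_neg {A B : Matrix n n ℂ}
    (h : SemiconjBy B A (-A)) (w : n → ℂ) : exp A *ᵥ B *ᵥ exp A *ᵥ w = B *ᵥ w := by
  have hconj : exp A * B * exp A = B := exp_mul_mul_exp_of_semiconjBy_neg h
  rw [mulVec_mulVec, mulVec_mulVec, hconj]

theorem mulVec_exp_mulVec_of_commute {R : Type*} [Ring R] [TopologicalSpace R]
    [IsTopologicalRing R] [T2Space R] {A B : Matrix n n R} (h : Commute A B) (w : n → R) :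
    A *ᵥ exp B *ᵥ w = exp B *ᵥ A *ᵥ w := by
  have hcomm : A * exp B = exp B * A := h.exp_right
  rw [mulVec_mulVec, mulVec_mulVec, hcomm]

theorem exp_smul_mulVec_twistedDirac {γ : ι → Matrix n n ℂ} {Γ : Matrix n n ℂ}
    (hγ : ∀ μ, SemiconjBy (γ μ) Γ (-Γ)) (e : ι → E) (f : E → ι → ℝ)
    {φ : E → ℝ} {ψ : E → n → ℂ} {x : E}
    (hφ : DifferentiableAt ℝ φ x) (hψ : DifferentiableAt ℝ ψ x) :
    exp (φ x • Γ) *ᵥ twistedDirac γ Γ e f (fun y => exp (φ y • Γ) *ᵥ ψ y) x =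
      twistedDirac γ Γ e (fun y μ => f y μ + fderiv ℝ φ y (e μ)) ψ x := by
  have hcov (μ : ι) :
      fderiv ℝ (fun y => exp (φ y • Γ) *ᵥ ψ y) x (e μ) + (f x μ : ℂ) • Γ *ᵥ exp (φ x • Γ) *ᵥ ψ x =
        exp (φ x • Γ) *ᵥ
          (fderiv ℝ ψ x (e μ) + ((f x μ + fderiv ℝ φ x (e μ) : ℝ) : ℂ) • Γ *ᵥ ψ x) := by
    rw [fderiv_exp_smul_mulVec Γ hφ hψ,
      mulVec_exp_mulVec_of_commute ((Commute.refl Γ).smul_right (φ x)), ← mulVec_smul (exp _),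
      ← mulVec_add, Complex.ofReal_add, add_smul, add_assoc, add_comm (_ • _)]
  have hanti (μ : ι) : SemiconjBy (γ μ) (φ x • Γ) (-(φ x • Γ)) :=
    smul_neg (φ x) Γ ▸ (hγ μ).smul_right (φ x)
  simp only [twistedDirac, hcov, mulVec_smul, mulVec_sum,
    exp_mulVec_mulVec_exp_mulVec_of_semiconjBy_neg (hanti _)]

theorem exp_smul_diagonal (t : ℝ) (d : n → ℂ) :
    exp (t • diagonal d) = diagonal fun i => Complex.exp (t * d i) := by
  rw [← diagonal_smul, exp_diagonal, Pi.exp_def]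
  simp only [Pi.smul_apply, Complex.real_smul, Complex.exp_eq_exp_ℂ]

end GaugeTransformation

theorem Γ₅_eq_diagonal : Γ₅ = diagonal ![1, 1, -1, -1] := by
  ext i j
  fin_cases i <;> fin_cases j <;> rfl

theorem semiconjBy_γE_Γ₅ (μ : Fin 4) : SemiconjBy (γE μ) Γ₅ (-Γ₅) := by
  rw [SemiconjBy, Γ₅_eq_diagonal, diagonal_neg]
  ext i j
  rw [mul_diagonal, diagonal_mul]
  fin_cases μ <;> fin_cases i <;> fin_cases j <;> simp [γE]

theorem mh_eq_exp_log_smul_Γ₅ {h : (Fin 4 → ℝ) → ℂ} {x : Fin 4 → ℝ} (hx : h x ≠ 0) :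
    Mh h x = NormedSpace.exp (Real.log (‖h x‖ ^ 2) • Γ₅) := by
  have hpos : 0 < ‖h x‖ ^ 2 := by positivity
  have hexp : Complex.exp (Real.log (‖h x‖ ^ 2)) = (‖h x‖ ^ 2 : ℝ) := by
    rw [← Complex.ofReal_exp, Real.exp_log hpos]
  rw [Γ₅_eq_diagonal, exp_smul_diagonal, Mh]
  congr 1
  ext i
  fin_cases i <;>
    simp only [Fin.mk_one, Fin.zero_eta, Fin.reduceFinMk, cons_val, mul_one, mul_neg,
      Complex.exp_neg, hexp]

theorem dirac_eq_twistedDirac (f : (Fin 4 → ℝ) → Fin 4 → ℝ) (ψ : (Fin 4 → ℝ) → Fin 4 → ℂ)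
    (x : Fin 4 → ℝ) :
    Dirac f ψ x = twistedDirac γE Γ₅ (fun μ => Pi.single μ 1) f ψ x := by
  simp only [Dirac, twistedDirac, mulVec_add, mulVec_smul, mulVec_mulVec, Finset.sum_add_distrib,
    smul_add, neg_smul, sub_eq_add_neg]

theorem statement11_general (f : (Fin 4 → ℝ) → Fin 4 → ℝ) {h : (Fin 4 → ℝ) → ℂ}
    {ψ : (Fin 4 → ℝ) → Fin 4 → ℂ} {x : Fin 4 → ℝ} (hh : DifferentiableAt ℝ h x) (hx : h x ≠ 0)
    (hψ : DifferentiableAt ℝ ψ x) :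
    Mh h x *ᵥ Dirac f (fun y => Mh h y *ᵥ ψ y) x =
      Dirac (fun y μ => f y μ + fderiv ℝ (fun z => Real.log (‖h z‖ ^ 2)) y (Pi.single μ 1))
        ψ x := by
  have hφ : DifferentiableAt ℝ (fun y => Real.log (‖h y‖ ^ 2)) x :=
    (hh.norm_sq ℝ).log (by simpa using hx)
  have hM : (fun y => Mh h y *ᵥ ψ y) =ᶠ[nhds x]
      fun y => NormedSpace.exp (Real.log (‖h y‖ ^ 2) • Γ₅) *ᵥ ψ y := by
    filter_upwards [hh.continuousAt.eventually_ne hx] with y hy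
    rw [mh_eq_exp_log_smul_Γ₅ hy]
  rw [dirac_eq_twistedDirac, dirac_eq_twistedDirac, twistedDirac_congr_of_eventuallyEq _ _ _ _ hM,
    mh_eq_exp_log_smul_Γ₅ hx, exp_smul_mulVec_twistedDirac semiconjBy_γE_Γ₅ _ f hφ hψ]

/-- The conjugate action of the twisted unitary `u_{h'}` on the twisted-covariant Dirac
operator `D_f` maps the 1-form `f` to `f + d(log |h'|²)`. -/
theorem statement11 (f : (Fin 4 → ℝ) → Fin 4 → ℝ) (hf : ContDiff ℝ (⊤ : ℕ∞) f)
    (h' : (Fin 4 → ℝ) → ℂ) (hsm : ContDiff ℝ (⊤ : ℕ∞) h') (hnz : ∀ x, h' x ≠ 0)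
    (ψ : (Fin 4 → ℝ) → Fin 4 → ℂ) (hψ : ContDiff ℝ (⊤ : ℕ∞) ψ) (x : Fin 4 → ℝ) :
    Mh h' x *ᵥ Dirac f (fun y => Mh h' y *ᵥ ψ y) x =
      (-Complex.I) • (∑ μ : Fin 4, γE μ *ᵥ fderiv ℝ ψ x (Pi.single μ 1)) -
        Complex.I • ∑ μ : Fin 4,
          (((f x μ + fderiv ℝ (fun y => Real.log (‖h' y‖ ^ 2)) x (Pi.single μ 1) : ℝ)) : ℂ) •
            ((γE μ * Γ₅) *ᵥ ψ x) :=
  statement11_general f (hsm.differentiable (by simp) x) (hnz x)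
    (hψ.differentiable (by simp) x)
end
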